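/- Let a fusion datum on a countable type I admit a sequence (F_n) of nonempty finite subsets of I such that both |∂_γ F_n|_w / |F_n|_w → 0 and |∂ᴸ_γ F_n|_w / |F_n|_w → 0 as n → ∞, for every γ ∈ I. Let A be a nontrivial (1 ≠ 0) unital C*-algebra, let (T_α)_{α∈I} be a CFA-type action of the fusion datum on A, and set σ_α := (1/(d α))·T_α. Then: (i) there exists a state ψ on A with ψ(σ_α(a)) = ψ(a) for all α ∈ I and a ∈ A (an FA-invariant state exists); and (ii) the sequence ξ_n : I → A defined by ξ_n(α) := |F_n|_w^{-1/2}·(d α)·1_A for α ∈ F_n and ξ_n(α) := 0 otherwise, satisfies ⟨ξ_n|ξ_n⟩_A = 1_A, ξ_n(α)·a = a·ξ_n(α) for all α and a, and ‖δ_γ *_σ ξ_n − ξ_n‖_{2,A} → 0 for every γ ∈ I; that is, the action is FA-amenable. -/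

import Mathlib

open scoped BigOperators
open Filter
open scoped Classical

/-- A fusion datum on a type `I`: unit, structure constants, involution and a
dimension function satisfying the unit laws, Frobenius reciprocity and
multiplicativity of the dimension function. -/
structure FusionDatum (I : Type*) where
  e : I
  N : I → I → I → ℕ
  conj : I → I
  d : I → ℝ
  conj_e : conj e = e
  conj_conj : ∀ α, conj (conj α) = α
  N_conj : ∀ α β γ, N α β γ = N (conj β) (conj α) (conj γ)
  one_le_d : ∀ α, 1 ≤ d α
  d_conj : ∀ α, d (conj α) = d α
  N_unit_left : ∀ α γ, N e α γ = if γ = α then 1 else 0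
  N_unit_right : ∀ α γ, N α e γ = if γ = α then 1 else 0
  frobenius₁ : ∀ α β γ, N α β γ = N γ (conj β) α
  frobenius₂ : ∀ α β γ, N α β γ = N (conj α) γ β
  mul_support_finite : ∀ α β, (Function.support fun γ => (N α β γ : ℝ) * d γ).Finite
  d_mul : ∀ α β, (∑ᶠ γ, (N α β γ : ℝ) * d γ) = d α * d β

/-- Weighted cardinality `|S|_w = Σ_{α∈S} (d α)²` of a set. -/
noncomputable def FusionDatum.wcard {I : Type*} (F : FusionDatum I) (S : Set I) : ℝ :=
  ∑ᶠ α ∈ S, F.d α ^ 2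

/-- Right γ-boundary `∂_γ S`. -/
def FusionDatum.rBoundary {I : Type*} (F : FusionDatum I) (γ : I) (S : Set I) : Set I :=
  {α | (α ∈ S ∧ ∃ β ∉ S, 0 < F.N α γ β) ∨ (α ∉ S ∧ ∃ β ∈ S, 0 < F.N α γ β)}

/-- Left γ-boundary `∂ᴸ_γ S`. -/
def FusionDatum.lBoundary {I : Type*} (F : FusionDatum I) (γ : I) (S : Set I) : Set I :=
  {α | (α ∈ S ∧ ∃ β ∉ S, 0 < F.N γ α β) ∨ (α ∉ S ∧ ∃ β ∈ S, 0 < F.N γ α β)}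

/-- ℓ²-norm `(Σ_β |g β|²)^{1/2}` of a (finitely supported) function. -/
noncomputable def l2norm {I : Type*} (g : I → ℂ) : ℝ :=
  Real.sqrt (∑ᶠ β, ‖g β‖ ^ 2)

/-- The convolution operator `l_γ`. -/
noncomputable def FusionDatum.lconv {I : Type*} (F : FusionDatum I) (γ : I) (f : I → ℂ) :
    I → ℂ :=
  fun β => (1 / (F.d γ : ℂ)) * ∑ᶠ η, (F.N γ η β : ℂ) * f η

/-- A state on a unital C*-algebra: a unital positive linear functional. -/
structure CStarState (A : Type*) [NormedRing A] [StarRing A] [NormedAlgebra ℂ A] where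
  toFun : A →ₗ[ℂ] ℂ
  map_one : toFun 1 = 1
  pos : ∀ a : A, 0 ≤ (toFun (star a * a)).re ∧ (toFun (star a * a)).im = 0

/-- A CFA-type action of a fusion datum on a unital C*-algebra: `T α a` encodes `χ(α)·a`. -/
structure CFAAction {I : Type*} (F : FusionDatum I) (A : Type*)
    [NormedRing A] [StarRing A] [NormedAlgebra ℂ A] where
  T : I → A →ₗ[ℂ] A
  map_star : ∀ α a, T α (star a) = star (T α a)
  norm_le : ∀ α a, ‖T α a‖ ≤ F.d α * ‖a‖
  map_one : ∀ α, T α 1 = (F.d α : ℂ) • (1 : A)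
  comp_eq : ∀ α β a, T α (T β a) = ∑ᶠ γ, (F.N α β γ) • T γ a

/-- `⟨f|f⟩_A = Σ_α f α · (f α)*`. -/
noncomputable def innerA {I A : Type*} [NormedRing A] [StarRing A] (f : I → A) : A :=
  ∑ᶠ α, f α * star (f α)

/-- `‖f‖_{2,A} = ‖⟨f|f⟩_A‖^{1/2}`. -/
noncomputable def norm2A {I A : Type*} [NormedRing A] [StarRing A] (f : I → A) : ℝ :=
  Real.sqrt ‖innerA f‖

/-- Twisted convolution `(δ_γ *_σ f)(β) = (1/(d γ))·Σ_η N γ η β · σ_γ(f η)`. -/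
noncomputable def FusionDatum.tconv {I A : Type*} [NormedRing A] [NormedAlgebra ℂ A]
    (F : FusionDatum I) (σ : I → A → A) (γ : I) (f : I → A) : I → A :=
  fun β => (((F.d γ)⁻¹ : ℝ) : ℂ) • ∑ᶠ η, (F.N γ η β) • σ γ (f η)

/-- The ℂ-valued Følner vectors `ξ_F = |F|_w^{-1/2} Σ_{α∈F} d α · δ_α`. -/
noncomputable def xiC {I : Type*} (F : FusionDatum I) (S : Finset I) : I → ℂ :=
  fun α => if α ∈ S then (((Real.sqrt (F.wcard (S : Set I)))⁻¹ * F.d α : ℝ) : ℂ) else 0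

/-- The A-valued Følner vectors `ξ_F = |F|_w^{-1/2} Σ_{α∈F} d α · δ_α ⊗ 1_A`. -/
noncomputable def xiA {I : Type*} (F : FusionDatum I) (S : Finset I)
    (A : Type*) [NormedRing A] [NormedAlgebra ℂ A] : I → A :=
  fun α => if α ∈ S then (((Real.sqrt (F.wcard (S : Set I)))⁻¹ * F.d α : ℝ) : ℂ) • (1 : A)
    else 0

/-- The normalized action `σ_α = (1/(d α))·T_α` of the CFA form. -/
noncomputable def cfaSigma {I : Type*} (F : FusionDatum I) {A : Type*}
    [NormedRing A] [StarRing A] [NormedAlgebra ℂ A]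
    (act : CFAAction F A) : I → A → A :=
  fun α a => (((F.d α)⁻¹ : ℝ) : ℂ) • act.T α a

/-! The `T α` are not assumed positive, so states are not visibly averaged to states. Instead,
weight `α ∈ S` by `d α ^ 2 / |S|_w` and average the operators `σ α` themselves: the means are unital
contractions of `A`, and right translation by `σ γ` changes them only on the right boundary of `S`,
because `d` is an eigenvector of the fusion matrices. A weak-star limit of `φ ∘ mean`, for `φ` a
norm-one functional with `φ 1 = 1`, is then an invariant unital contraction to `ℂ`, and these are
automatically positive. The Følner vectors take values in `ℂ • 1`, where `σ γ` acts trivially, so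
their asymptotic invariance is the same boundary estimate for the opposite fusion datum. -/

section Contractive

variable {A : Type*} [NormedRing A] [StarRing A] [CStarRing A] [NormedAlgebra ℂ A] [StarModule ℂ A]

theorem norm_add_I_smul_one_sq_le [Nontrivial A] {b : A} (hb : IsSelfAdjoint b)
    (t : ℝ) : ‖b + (t * Complex.I) • (1 : A)‖ ^ 2 ≤ ‖b‖ ^ 2 + t ^ 2 := by
  have expand : star (b + (t * Complex.I) • (1 : A)) * (b + (t * Complex.I) • (1 : A)) =
      b * b + ((t ^ 2 : ℝ) : ℂ) • (1 : A) := by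
    have conj_mul : -(t * Complex.I) * (t * Complex.I) = ((t ^ 2 : ℝ) : ℂ) := by
      push_cast
      linear_combination (-(t : ℂ) ^ 2) * Complex.I_sq
    rw [star_add, star_smul, hb.star_eq, star_one, ← conj_mul]
    simp only [star_mul', Complex.star_def, Complex.conj_ofReal, Complex.conj_I, add_mul, mul_add,
      smul_mul_assoc, mul_smul_comm, one_mul, mul_one]
    module
  calc ‖b + (t * Complex.I) • (1 : A)‖ ^ 2
      = ‖b * b + ((t ^ 2 : ℝ) : ℂ) • (1 : A)‖ := by
        rw [sq, ← CStarRing.norm_star_mul_self, expand]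
    _ ≤ ‖b * b‖ + ‖((t ^ 2 : ℝ) : ℂ) • (1 : A)‖ := norm_add_le _ _
    _ ≤ ‖b‖ ^ 2 + t ^ 2 := by
        rw [norm_smul, CStarRing.norm_one, mul_one, Complex.norm_of_nonneg (sq_nonneg t), sq ‖b‖]
        gcongr
        exact norm_mul_le b b

theorem im_apply_eq_zero_of_contractive [Nontrivial A] {ψ : A →ₗ[ℂ] ℂ} (map_one : ψ 1 = 1)
    (norm_le : ∀ a, ‖ψ a‖ ≤ ‖a‖) {b : A} (hb : IsSelfAdjoint b) : (ψ b).im = 0 := by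
  set y := (ψ b).im with hy
  have shifted (t : ℝ) : (y + t) ^ 2 ≤ ‖b‖ ^ 2 + t ^ 2 := by
    have im_shift : (ψ (b + (t * Complex.I) • (1 : A))).im = y + t := by
      simp [map_one, hy]
    calc (y + t) ^ 2 = |(ψ (b + (t * Complex.I) • (1 : A))).im| ^ 2 := by rw [im_shift, sq_abs]
      _ ≤ ‖b + (t * Complex.I) • (1 : A)‖ ^ 2 := by
          gcongr
          exact (Complex.abs_im_le_norm _).trans (norm_le _)
      _ ≤ ‖b‖ ^ 2 + t ^ 2 := norm_add_I_smul_one_sq_le hb t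
  by_contra hy0
  have bound := shifted ((‖b‖ ^ 2 + 1) / (2 * y))
  have cross : 2 * y * ((‖b‖ ^ 2 + 1) / (2 * y)) = ‖b‖ ^ 2 + 1 :=
    mul_div_cancel₀ _ (mul_ne_zero two_ne_zero hy0)
  nlinarith [sq_nonneg y]

end Contractive

theorem re_apply_nonneg_of_contractive {A : Type*} [CStarAlgebra A] [PartialOrder A]
    [StarOrderedRing A] {ψ : A →ₗ[ℂ] ℂ} (map_one : ψ 1 = 1) (norm_le : ∀ a, ‖ψ a‖ ≤ ‖a‖)
    {b : A} (hb : 0 ≤ b) : 0 ≤ (ψ b).re := by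
  have reflect_nonneg : 0 ≤ algebraMap ℝ A ‖b‖ - b :=
    sub_nonneg.mpr (IsSelfAdjoint.of_nonneg hb).le_algebraMap_norm_self
  have norm_reflect : ‖algebraMap ℝ A ‖b‖ - b‖ ≤ ‖b‖ :=
    (CStarAlgebra.norm_le_iff_le_algebraMap _ (norm_nonneg b) reflect_nonneg).mpr
      (sub_le_self _ hb)
  have apply_reflect : ψ (algebraMap ℝ A ‖b‖ - b) = ‖b‖ - ψ b := by
    have : algebraMap ℝ A ‖b‖ = (‖b‖ : ℂ) • (1 : A) := Algebra.algebraMap_eq_smul_one _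
    rw [this, map_sub, map_smul, map_one, smul_eq_mul, mul_one]
  have re_reflect : ‖b‖ - (ψ b).re ≤ ‖b‖ := by
    simpa [apply_reflect] using (Complex.re_le_norm _).trans ((norm_le _).trans norm_reflect)
  linarith

theorem exists_cstarState_toFun_eq {A : Type*} [NormedRing A] [StarRing A] [CStarRing A]
    [NormedAlgebra ℂ A] [StarModule ℂ A] [CompleteSpace A] [Nontrivial A] (ψ : A →ₗ[ℂ] ℂ)
    (map_one : ψ 1 = 1) (norm_le : ∀ a, ‖ψ a‖ ≤ ‖a‖) : ∃ φ : CStarState A, φ.toFun = ψ := by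
  let _ : CStarAlgebra A := {}
  let _ : PartialOrder A := CStarAlgebra.spectralOrder A
  have _ : StarOrderedRing A := CStarAlgebra.spectralOrderedRing A
  exact ⟨⟨ψ, map_one, fun a =>
    ⟨re_apply_nonneg_of_contractive map_one norm_le (star_mul_self_nonneg a),
      im_apply_eq_zero_of_contractive map_one norm_le (.star_mul_self a)⟩⟩, rfl⟩

theorem exists_ultrafilter_tendsto_apply {𝕜 E ι : Type*} [NontriviallyNormedField 𝕜]
    [ProperSpace 𝕜] [SeminormedAddCommGroup E] [NormedSpace 𝕜 E] {l : Filter ι} [l.NeBot]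
    {f : ι → StrongDual 𝕜 E} {r : ℝ} (hf : ∀ i, ‖f i‖ ≤ r) :
    ∃ U : Ultrafilter ι, ↑U ≤ l ∧ ∃ ψ : StrongDual 𝕜 E, ‖ψ‖ ≤ r ∧
      ∀ a, Tendsto (fun i => f i a) U (nhds (ψ a)) := by
  obtain ⟨ψ, hψ, cluster⟩ := (WeakDual.isCompact_closedBall (0 : StrongDual 𝕜 E) r)
    |>.exists_mapClusterPt (f := l) (u := fun i => StrongDual.toWeakDual (f i))
      (tendsto_principal.mpr <| .of_forall fun i => by simpa using hf i)
  obtain ⟨U, hU, tendsto_ψ⟩ := mapClusterPt_iff_ultrafilter.mp cluster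
  exact ⟨U, hU, WeakDual.toStrongDual ψ, by simpa using hψ,
    fun a => ((WeakDual.eval_continuous a).tendsto ψ).comp tendsto_ψ⟩

namespace FusionDatum

variable {I : Type*} (F : FusionDatum I)

theorem d_pos (α : I) : 0 < F.d α := one_pos.trans_le (F.one_le_d α)

/-- The fusion datum with the product reversed. It exchanges left and right boundaries, so that
left-handed estimates are right-handed ones for `F.op`. -/
def op : FusionDatum I where
  e := F.e
  N α β γ := F.N β α γ
  conj := F.conj
  d := F.d
  conj_e := F.conj_e
  conj_conj := F.conj_conj
  N_conj α β γ := F.N_conj β α γ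
  one_le_d := F.one_le_d
  d_conj := F.d_conj
  N_unit_left := F.N_unit_right
  N_unit_right := F.N_unit_left
  frobenius₁ α β γ := F.frobenius₂ β α γ
  frobenius₂ α β γ := F.frobenius₁ β α γ
  mul_support_finite α β := F.mul_support_finite β α
  d_mul α β := (F.d_mul β α).trans (mul_comm _ _)

theorem finite_setOf_N_pos (α β : I) : {γ | 0 < F.N α β γ}.Finite :=
  (F.mul_support_finite α β).subset fun γ hγ =>
    mul_ne_zero (Nat.cast_ne_zero.mpr (ne_of_gt hγ)) (F.d_pos γ).ne'

theorem finite_rBoundary (γ : I) (S : Finset I) : (F.rBoundary γ S).Finite := by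
  refine (S.finite_toSet.union (S.finite_toSet.biUnion fun β _ =>
    F.finite_setOf_N_pos β (F.conj γ))).subset ?_
  rintro α (⟨hα, -⟩ | ⟨-, β, hβ, hN⟩)
  · exact Or.inl hα
  · exact Or.inr (Set.mem_biUnion hβ (hN.trans_eq (F.frobenius₁ α γ β)))

theorem wcard_coe (S : Finset I) : F.wcard S = ∑ α ∈ S, F.d α ^ 2 :=
  finsum_mem_coe_finset _ _

theorem wcard_nonneg (S : Set I) : 0 ≤ F.wcard S :=
  finsum_nonneg fun α => finsum_nonneg fun _ => sq_nonneg (F.d α)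

theorem wcard_pos {S : Finset I} (hS : S.Nonempty) : 0 < F.wcard S := by
  rw [wcard_coe]
  exact Finset.sum_pos (fun α _ => pow_pos (F.d_pos α) 2) hS

theorem finsum_indicator_d_sq (S : Set I) : ∑ᶠ α, S.indicator F.d α ^ 2 = F.wcard S := by
  rw [wcard, finsum_mem_def]
  refine finsum_congr fun α => ?_
  by_cases hα : α ∈ S <;> simp [hα]

/-- The failure `(d · 1_S) * δ_γ / d γ - d · 1_S` of the restriction of `d` to `S` to be invariant
under convolution by the normalized `δ_γ` on the right. -/
noncomputable def defect (γ : I) (S : Finset I) (β : I) : ℝ :=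
  (F.d γ)⁻¹ * ∑ η ∈ S, (F.N η γ β : ℝ) * F.d η - (S : Set I).indicator F.d β

theorem finite_support_N_mul_d (γ β : I) :
    (fun η => (F.N η γ β : ℝ) * F.d η).HasFiniteSupport := by
  simp only [F.frobenius₁ _ γ β]
  exact F.mul_support_finite β (F.conj γ)

theorem finsum_N_mul_d (γ β : I) : ∑ᶠ η, (F.N η γ β : ℝ) * F.d η = F.d γ * F.d β := by
  simpa only [F.frobenius₁ _ γ β, F.d_conj, mul_comm (F.d β)] using F.d_mul β (F.conj γ)

theorem abs_defect_le_d (γ : I) (S : Finset I) (β : I) : |F.defect γ S β| ≤ F.d β := by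
  have nonneg (η : I) : 0 ≤ (F.N η γ β : ℝ) * F.d η :=
    mul_nonneg (Nat.cast_nonneg _) (F.d_pos η).le
  have sum_le : ∑ η ∈ S, (F.N η γ β : ℝ) * F.d η ≤ F.d γ * F.d β := by
    rw [← F.finsum_N_mul_d, ← finsum_mem_coe_finset, finsum_mem_def]
    exact finsum_le_finsum' ((F.finite_support_N_mul_d γ β).subset
      (Set.support_indicator.trans_subset Set.inter_subset_right)) (F.finite_support_N_mul_d γ β)
      (Set.indicator_le_self' fun η _ => nonneg η)
  have mean_nonneg : 0 ≤ (F.d γ)⁻¹ * ∑ η ∈ S, (F.N η γ β : ℝ) * F.d η :=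
    mul_nonneg (inv_nonneg.mpr (F.d_pos γ).le) (Finset.sum_nonneg fun η _ => nonneg η)
  have mean_le : (F.d γ)⁻¹ * ∑ η ∈ S, (F.N η γ β : ℝ) * F.d η ≤ F.d β :=
    (inv_mul_le_iff₀ (F.d_pos γ)).mpr sum_le
  exact abs_sub_le_of_nonneg_of_le mean_nonneg mean_le
    (Set.indicator_nonneg (fun α _ => (F.d_pos α).le) β)
    (Set.indicator_le_self' (fun _ _ => (F.d_pos β).le) β)

theorem defect_eq_zero {γ β : I} {S : Finset I} (hβ : β ∉ F.rBoundary (F.conj γ) S) :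
    F.defect γ S β = 0 := by
  simp only [rBoundary, Set.mem_ofPred_eq, ← F.frobenius₁, not_or, not_and, not_exists,
    Nat.pos_iff_ne_zero, not_not] at hβ
  by_cases hβS : β ∈ (S : Set I)
  · have full : ∑ η ∈ S, (F.N η γ β : ℝ) * F.d η = F.d γ * F.d β := by
      rw [← F.finsum_N_mul_d]
      refine (finsum_eq_sum_of_support_subset _ fun η hη => ?_).symm
      by_contra hηS
      exact hη (by simp [hβ.1 hβS η hηS])
    rw [defect, full, inv_mul_cancel_left₀ (F.d_pos γ).ne', Set.indicator_of_mem hβS, sub_self]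
  · have empty : ∑ η ∈ S, (F.N η γ β : ℝ) * F.d η = 0 :=
      Finset.sum_eq_zero fun η hη => by simp [hβ.2 hβS η hη]
    rw [defect, empty, mul_zero, Set.indicator_of_notMem hβS, sub_self]

theorem support_defect_subset (γ : I) (S : Finset I) :
    Function.support (F.defect γ S) ⊆ F.rBoundary (F.conj γ) S :=
  fun _ hβ => by_contra fun h => hβ (F.defect_eq_zero h)

@[fun_prop]
theorem finite_support_defect (γ : I) (S : Finset I) : (F.defect γ S).HasFiniteSupport :=
  (F.finite_rBoundary _ S).subset (F.support_defect_subset γ S)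

theorem finsum_abs_defect_mul_d_le (γ : I) (S : Finset I) :
    ∑ᶠ β, |F.defect γ S β| * F.d β ≤ F.wcard (F.rBoundary (F.conj γ) S) := by
  rw [← finsum_indicator_d_sq]
  refine finsum_le_finsum' ?_ ?_ fun β => ?_
  · fun_prop (disch := simp)
  · exact (F.finite_rBoundary (F.conj γ) S).subset fun β hβ =>
      by_contra fun h => hβ (by simp [h])
  · by_cases hβ : β ∈ F.rBoundary (F.conj γ) S
    · simp only [Set.indicator_of_mem hβ, sq]
      exact mul_le_mul_of_nonneg_right (F.abs_defect_le_d γ S β) (F.d_pos β).le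
    · simp [F.defect_eq_zero hβ, hβ]

theorem finsum_defect_sq_le (γ : I) (S : Finset I) :
    ∑ᶠ β, F.defect γ S β ^ 2 ≤ F.wcard (F.rBoundary (F.conj γ) S) := by
  refine (finsum_le_finsum' ?_ ?_ fun β => ?_).trans (F.finsum_abs_defect_mul_d_le γ S)
  · fun_prop (disch := simp)
  · fun_prop (disch := simp)
  · rw [← sq_abs, sq]
    exact mul_le_mul_of_nonneg_left (F.abs_defect_le_d γ S β) (abs_nonneg _)

end FusionDatum

theorem norm_finsum_le {ι E : Type*} [SeminormedAddCommGroup E] {f : ι → E}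
    (hf : f.HasFiniteSupport) : ‖∑ᶠ i, f i‖ ≤ ∑ᶠ i, ‖f i‖ := by
  rw [finsum_eq_sum f hf, finsum_eq_sum_of_support_subset (s := hf.toFinset) (fun i => ‖f i‖)
    fun i hi => hf.mem_toFinset.mpr fun h => hi (by simp [h])]
  exact norm_sum_le _ _

namespace CFAAction

variable {I : Type*} {F : FusionDatum I} {A : Type*} [NormedRing A] [StarRing A]
  [NormedAlgebra ℂ A] (act : CFAAction F A)

theorem finite_support_N_smul_T (α γ : I) (a : A) :
    (fun β => F.N α γ β • act.T β a).HasFiniteSupport :=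
  (F.finite_setOf_N_pos α γ).subset fun β hβ =>
    Nat.pos_of_ne_zero fun h => hβ (by simp [h])

theorem sum_d_smul_T_cfaSigma_sub (γ : I) (S : Finset I) (a : A) :
    ∑ α ∈ S, (F.d α : ℂ) • act.T α (cfaSigma F act γ a) - ∑ α ∈ S, (F.d α : ℂ) • act.T α a =
      ∑ᶠ β, (F.defect γ S β : ℂ) • act.T β a := by
  have expand (α : I) : (F.d α : ℂ) • act.T α (cfaSigma F act γ a) =
      ∑ᶠ β, (((F.d γ)⁻¹ * (F.N α γ β * F.d α) : ℝ) : ℂ) • act.T β a := by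
    rw [cfaSigma, map_smul, act.comp_eq, smul_smul, smul_finsum' _ (act.finite_support_N_smul_T ..)]
    refine finsum_congr fun β => ?_
    rw [← Nat.cast_smul_eq_nsmul ℂ, smul_smul]
    push_cast
    ring_nf
  have translated : ∑ α ∈ S, (F.d α : ℂ) • act.T α (cfaSigma F act γ a) =
      ∑ᶠ β, (((F.d γ)⁻¹ * ∑ η ∈ S, F.N η γ β * F.d η : ℝ) : ℂ) • act.T β a := by
    simp only [expand, Finset.mul_sum, Complex.ofReal_sum, Finset.sum_smul]
    exact sum_finsum_comm S _ fun α _ => (F.finite_setOf_N_pos α γ).subset fun β hβ =>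
      Nat.pos_of_ne_zero fun h => hβ (by simp [h])
  have restricted : ∑ α ∈ S, (F.d α : ℂ) • act.T α a =
      ∑ᶠ β, (((S : Set I).indicator F.d β : ℝ) : ℂ) • act.T β a := by
    rw [← finsum_mem_coe_finset, finsum_mem_def]
    refine finsum_congr fun β => ?_
    by_cases hβ : β ∈ (S : Set I) <;> simp [hβ]
  rw [sub_eq_iff_eq_add, translated, restricted, ← finsum_add_distrib]
  · refine finsum_congr fun β => ?_
    rw [← add_smul, FusionDatum.defect]
    push_cast
    rw [sub_add_cancel]
  · fun_prop (disch := simp)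
  · exact S.finite_toSet.subset fun β hβ => by_contra fun h => hβ (by simp [h])

/-- The average of the operators `σ α` over `α ∈ S` with weights `d α ^ 2 / |S|_w`, written in terms
of `T α = d α • σ α`. -/
noncomputable def mean (S : Finset I) : A →ₗ[ℂ] A :=
  (((F.wcard S)⁻¹ : ℝ) : ℂ) • ∑ α ∈ S, (F.d α : ℂ) • act.T α

theorem mean_apply (S : Finset I) (a : A) :
    act.mean S a = (((F.wcard S)⁻¹ : ℝ) : ℂ) • ∑ α ∈ S, (F.d α : ℂ) • act.T α a := by
  simp [mean, LinearMap.sum_apply]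

theorem mean_one {S : Finset I} (hS : S.Nonempty) : act.mean S 1 = 1 := by
  have sum_eq : ∑ α ∈ S, (F.d α : ℂ) * F.d α = (F.wcard S : ℝ) := by
    simp [F.wcard_coe, sq]
  simp only [mean_apply, act.map_one, smul_smul, ← Finset.sum_smul, sum_eq]
  rw [← Complex.ofReal_mul, inv_mul_cancel₀ (F.wcard_pos hS).ne', Complex.ofReal_one, one_smul]

theorem norm_mean_le {S : Finset I} (hS : S.Nonempty) (a : A) : ‖act.mean S a‖ ≤ ‖a‖ := by
  have hw := F.wcard_pos hS
  rw [mean_apply, norm_smul, Complex.norm_of_nonneg (inv_pos.mpr hw).le, inv_mul_le_iff₀ hw,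
    F.wcard_coe, Finset.sum_mul]
  refine norm_sum_le_of_le S fun α _ => ?_
  rw [norm_smul, Complex.norm_of_nonneg (F.d_pos α).le, sq, mul_assoc]
  exact mul_le_mul_of_nonneg_left (act.norm_le α a) (F.d_pos α).le

theorem norm_mean_cfaSigma_sub_le (γ : I) (S : Finset I) (a : A) :
    ‖act.mean S (cfaSigma F act γ a) - act.mean S a‖ ≤
      F.wcard (F.rBoundary (F.conj γ) S) / F.wcard S * ‖a‖ := by
  have hw := F.wcard_nonneg (S : Set I)
  have norm_le : ‖∑ᶠ β, (F.defect γ S β : ℂ) • act.T β a‖ ≤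
      F.wcard (F.rBoundary (F.conj γ) S) * ‖a‖ :=
    calc ‖∑ᶠ β, (F.defect γ S β : ℂ) • act.T β a‖
        ≤ ∑ᶠ β, ‖(F.defect γ S β : ℂ) • act.T β a‖ :=
          norm_finsum_le (by fun_prop (disch := simp))
      _ ≤ ∑ᶠ β, |F.defect γ S β| * F.d β * ‖a‖ := by
          refine finsum_le_finsum' (by fun_prop (disch := simp))
            (by fun_prop (disch := simp)) fun β => ?_
          rw [norm_smul, Complex.norm_real, Real.norm_eq_abs, mul_assoc]
          exact mul_le_mul_of_nonneg_left (act.norm_le β a) (abs_nonneg _)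
      _ = (∑ᶠ β, |F.defect γ S β| * F.d β) * ‖a‖ := (finsum_mul _ _).symm
      _ ≤ F.wcard (F.rBoundary (F.conj γ) S) * ‖a‖ :=
          mul_le_mul_of_nonneg_right (F.finsum_abs_defect_mul_d_le γ S) (norm_nonneg a)
  rw [mean_apply, mean_apply, ← smul_sub, sum_d_smul_T_cfaSigma_sub, norm_smul,
    Complex.norm_of_nonneg (inv_nonneg.mpr hw), div_eq_inv_mul, mul_assoc]
  exact mul_le_mul_of_nonneg_left norm_le (inv_nonneg.mpr hw)

theorem exists_invariant_cstarState [CStarRing A] [StarModule ℂ A] [CompleteSpace A] [Nontrivial A]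
    {ι : Type*} {l : Filter ι} [l.NeBot] {S : ι → Finset I} (hne : ∀ i, (S i).Nonempty)
    (hS : ∀ γ, Tendsto (fun i => F.wcard (F.rBoundary γ (S i)) / F.wcard (S i)) l (nhds 0)) :
    ∃ ψ : CStarState A, ∀ (α : I) (a : A), ψ.toFun (cfaSigma F act α a) = ψ.toFun a := by
  obtain ⟨φ, norm_φ, φ_one⟩ := exists_dual_vector'' ℂ (1 : A)
  let f (i : ι) : StrongDual ℂ A := φ.comp <| (act.mean (S i)).mkContinuous 1
    fun a => by simpa using act.norm_mean_le (hne i) a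
  have norm_f (i : ι) : ‖f i‖ ≤ 1 :=
    (φ.opNorm_comp_le _).trans <|
      mul_le_one₀ norm_φ (norm_nonneg _) (LinearMap.mkContinuous_norm_le _ zero_le_one _)
  obtain ⟨U, hU, ψ, norm_ψ, tendsto_ψ⟩ := exists_ultrafilter_tendsto_apply (l := l) norm_f
  have ψ_one : ψ 1 = 1 := by
    refine tendsto_nhds_unique (tendsto_ψ 1) (tendsto_const_nhds.congr fun i => ?_)
    simp [f, act.mean_one (hne i), φ_one]
  have ψ_invariant (γ : I) (a : A) : ψ (cfaSigma F act γ a) = ψ a := by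
    refine sub_eq_zero.mp <| tendsto_nhds_unique ((tendsto_ψ _).sub (tendsto_ψ a)) ?_
    refine squeeze_zero_norm (fun i => ?_)
      (by simpa using ((hS (F.conj γ)).mono_left hU).mul_const ‖a‖)
    calc ‖f i (cfaSigma F act γ a) - f i a‖
        = ‖φ (act.mean (S i) (cfaSigma F act γ a) - act.mean (S i) a)‖ := by simp [f]
      _ ≤ ‖act.mean (S i) (cfaSigma F act γ a) - act.mean (S i) a‖ :=
        φ.le_of_opNorm_le norm_φ _ |>.trans_eq (one_mul _)
      _ ≤ _ := act.norm_mean_cfaSigma_sub_le γ (S i) a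
  obtain ⟨ψ', hψ'⟩ := exists_cstarState_toFun_eq (ψ : A →ₗ[ℂ] ℂ) ψ_one fun a =>
    (ψ.le_opNorm a).trans (mul_le_of_le_one_left (norm_nonneg a) norm_ψ)
  exact ⟨ψ', fun γ a => by simpa [hψ'] using ψ_invariant γ a⟩

end CFAAction

section FolnerVectors

variable {I : Type*} (F : FusionDatum I) {A : Type*} [NormedRing A] [NormedAlgebra ℂ A]

theorem xiA_eq_smul_one (S : Finset I) : xiA F S A =
    fun α => (((√(F.wcard S))⁻¹ * (S : Set I).indicator F.d α : ℝ) : ℂ) • (1 : A) := by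
  funext α
  by_cases hα : α ∈ S <;> simp [xiA, hα]

theorem xiA_mul_comm (S : Finset I) (α : I) (a : A) : xiA F S A α * a = a * xiA F S A α := by
  simp [xiA_eq_smul_one]

variable [StarRing A]

theorem innerA_smul_one [StarModule ℂ A] {g : I → ℝ} (hg : g.HasFiniteSupport) :
    innerA (fun β => (g β : ℂ) • (1 : A)) = ((∑ᶠ β, g β ^ 2 : ℝ) : ℂ) • (1 : A) := by
  have hg_sq : (fun β => g β ^ 2).HasFiniteSupport := by fun_prop (disch := simp)
  rw [Complex.coe_smul, finsum_smul' hg_sq]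
  refine finsum_congr fun β => ?_
  simp [smul_smul, sq]

theorem innerA_xiA [StarModule ℂ A] {S : Finset I} (hS : S.Nonempty) : innerA (xiA F S A) = 1 := by
  have hw := F.wcard_pos hS
  have sum_sq : ∑ᶠ α, ((√(F.wcard S))⁻¹ * (S : Set I).indicator F.d α) ^ 2 = 1 := by
    simp only [mul_pow, inv_pow, Real.sq_sqrt hw.le]
    rw [← mul_finsum, F.finsum_indicator_d_sq, inv_mul_cancel₀ hw.ne']
  rw [xiA_eq_smul_one, innerA_smul_one, sum_sq, Complex.ofReal_one, one_smul]
  exact S.finite_toSet.subset fun β hβ => by_contra fun h => hβ (by simp [h])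

theorem norm2A_smul_one [StarModule ℂ A] [NormOneClass A] {g : I → ℝ} (hg : g.HasFiniteSupport) :
    norm2A (fun β => (g β : ℂ) • (1 : A)) = √(∑ᶠ β, g β ^ 2) := by
  rw [norm2A, innerA_smul_one hg, norm_smul, norm_one, mul_one,
    Complex.norm_of_nonneg (finsum_nonneg fun β => sq_nonneg (g β))]

variable {F} (act : CFAAction F A)

theorem cfaSigma_smul_one (γ : I) (c : ℂ) : cfaSigma F act γ (c • (1 : A)) = c • (1 : A) := by
  have hd : (F.d γ : ℂ) ≠ 0 := Complex.ofReal_ne_zero.mpr (F.d_pos γ).ne'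
  rw [cfaSigma, map_smul, act.map_one, smul_comm c, smul_smul, Complex.ofReal_inv,
    inv_mul_cancel₀ hd, one_smul]

theorem tconv_xiA_sub_xiA (γ : I) (S : Finset I) :
    F.tconv (cfaSigma F act) γ (xiA F S A) - xiA F S A =
      fun β => (((√(F.wcard S))⁻¹ * F.op.defect γ S β : ℝ) : ℂ) • (1 : A) := by
  funext β
  have sum_eq : ∑ᶠ η, F.N γ η β • cfaSigma F act γ (xiA F S A η) =
      (((√(F.wcard S))⁻¹ * ∑ η ∈ S, (F.N γ η β : ℝ) * F.d η : ℝ) : ℂ) • (1 : A) := by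
    rw [finsum_eq_sum_of_support_subset (s := S) _ fun η hη => by_contra fun h => hη ?_]
    · rw [Finset.mul_sum, Complex.ofReal_sum, Finset.sum_smul]
      refine Finset.sum_congr rfl fun η hη => ?_
      rw [xiA, if_pos hη, cfaSigma_smul_one, ← Nat.cast_smul_eq_nsmul ℂ, smul_smul, mul_left_comm]
      push_cast
      rfl
    · rw [xiA, if_neg (Finset.mem_coe.not.mp h), ← zero_smul ℂ (1 : A), cfaSigma_smul_one,
        zero_smul, smul_zero]
  rw [Pi.sub_apply, FusionDatum.tconv, sum_eq, xiA_eq_smul_one, smul_smul, ← Complex.ofReal_mul,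
    ← sub_smul, ← Complex.ofReal_sub, mul_left_comm, ← mul_sub]
  rfl

theorem norm2A_tconv_xiA_sub_xiA_le [StarModule ℂ A] [NormOneClass A] (γ : I) (S : Finset I) :
    norm2A (F.tconv (cfaSigma F act) γ (xiA F S A) - xiA F S A) ≤
      √(F.wcard (F.lBoundary (F.conj γ) S) / F.wcard S) := by
  have hw := F.wcard_nonneg (S : Set I)
  rw [tconv_xiA_sub_xiA, norm2A_smul_one]
  · simp only [mul_pow, inv_pow, Real.sq_sqrt hw]
    rw [← mul_finsum, div_eq_inv_mul]
    exact Real.sqrt_le_sqrt <| mul_le_mul_of_nonneg_left (F.op.finsum_defect_sq_le γ S)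
      (inv_nonneg.mpr hw)
  · fun_prop

theorem tendsto_norm2A_tconv_xiA_sub_xiA [StarModule ℂ A] [NormOneClass A] {ι : Type*}
    {l : Filter ι} {S : ι → Finset I} {γ : I}
    (hS : Tendsto (fun i => F.wcard (F.lBoundary (F.conj γ) (S i)) / F.wcard (S i)) l (nhds 0)) :
    Tendsto (fun i => norm2A (F.tconv (cfaSigma F act) γ (xiA F (S i) A) - xiA F (S i) A))
      l (nhds 0) :=
  squeeze_zero (fun _ => Real.sqrt_nonneg _)
    (fun i => norm2A_tconv_xiA_sub_xiA_le act γ (S i)) (by simpa using hS.sqrt)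

end FolnerVectors

theorem stmt15_general {I ι : Type*} (F : FusionDatum I) {l : Filter ι} [l.NeBot]
    (S : ι → Finset I) (hne : ∀ i, (S i).Nonempty)
    (hFolR : ∀ γ : I, Tendsto
      (fun i => F.wcard (F.rBoundary γ (S i : Set I)) / F.wcard (S i : Set I)) l (nhds 0))
    (hFolL : ∀ γ : I, Tendsto
      (fun i => F.wcard (F.lBoundary γ (S i : Set I)) / F.wcard (S i : Set I)) l (nhds 0))
    {A : Type*} [NormedRing A] [StarRing A] [CStarRing A] [NormedAlgebra ℂ A]
    [StarModule ℂ A] [CompleteSpace A] [Nontrivial A] (act : CFAAction F A) :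
    (∃ ψ : CStarState A, ∀ (α : I) (a : A), ψ.toFun (cfaSigma F act α a) = ψ.toFun a) ∧
    (∀ i, innerA (xiA F (S i) A) = 1) ∧
    (∀ (i : ι) (α : I) (a : A), xiA F (S i) A α * a = a * xiA F (S i) A α) ∧
    ∀ γ : I, Tendsto
      (fun i => norm2A (F.tconv (cfaSigma F act) γ (xiA F (S i) A) - xiA F (S i) A)) l (nhds 0) :=
  ⟨act.exists_invariant_cstarState hne hFolR, fun i => innerA_xiA F (hne i),
    fun i => xiA_mul_comm F (S i), fun _ => tendsto_norm2A_tconv_xiA_sub_xiA act (hFolL _)⟩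

/-- under a two-sided Følner condition, any CFA-type action on a
nontrivial unital C*-algebra admits an FA-invariant state, and the canonical
`A`-valued vectors `ξ_n` form a Følner sequence for the normalized action `σ`, i.e.
the action is FA-amenable. -/
theorem stmt15 {I : Type*} [Countable I] (F : FusionDatum I) (Fn : ℕ → Finset I)
    (hne : ∀ n, (Fn n).Nonempty)
    (hFolR : ∀ γ : I, Tendsto
      (fun n => F.wcard (F.rBoundary γ (Fn n : Set I)) / F.wcard (Fn n : Set I))
      atTop (nhds 0))
    (hFolL : ∀ γ : I, Tendsto
      (fun n => F.wcard (F.lBoundary γ (Fn n : Set I)) / F.wcard (Fn n : Set I))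
      atTop (nhds 0))
    {A : Type*} [NormedRing A] [StarRing A] [CStarRing A] [NormedAlgebra ℂ A]
    [StarModule ℂ A] [CompleteSpace A] [Nontrivial A]
    (act : CFAAction F A) :
    (∃ ψ : CStarState A, ∀ (α : I) (a : A),
      ψ.toFun (cfaSigma F act α a) = ψ.toFun a) ∧
    (∀ n, innerA (xiA F (Fn n) A) = 1) ∧
    (∀ (n : ℕ) (α : I) (a : A), xiA F (Fn n) A α * a = a * xiA F (Fn n) A α) ∧
    ∀ γ : I, Tendsto
      (fun n => norm2A (F.tconv (cfaSigma F act) γ (xiA F (Fn n) A) - xiA F (Fn n) A))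
      atTop (nhds 0) :=
  stmt15_general F Fn hne hFolR hFolL act
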